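/- arXiv:2208.09445 — 2 statements merged into one kernel-verified Lean document; each statement's English description precedes it below -/
import Mathlib

section
/- Let Z : ℕ → ℝ be a sequence, k ∈ ℝ, and m, n ∈ ℕ with 10000 < m ≤ n < k. Assume that for every integer i with 1 ≤ i ≤ m: if i < 160 then |C̄_*|·(i+1)²·k/|i+1−k|·|Z_i| ≤ |Z_{i+1}| ≤ 500·|C̄_*|·(i+1)·k/|i+1−k|·|Z_i|; if i ≥ 160 then |C̄_*|·(i+1)²·k/|i+1−k|·|Z_i| ≤ |Z_{i+1}| ≤ 3·|C̄_*|·(i+1)²·k/|i+1−k|·|Z_i|; and if i > 10000 then |Z_{i+1} − C̄_*·(i+1)²·k/(i+1−k)·Z_i| ≤ 0.05·|Z_{i+1}|. Then for every integer j with 2 ≤ j ≤ (m+1)/2 the following hold: (a) if j < 160, then binom(m+1, j)·|Z_j·Z_{m+1−j}| ≤ binom(m+1, 1)·|Z₁·Z_m|·(600/m)^{j−1} and binom(m+2, j)·|Z_j·Z_{m+2−j}| ≤ binom(m+2, 2)·|Z₂·Z_m|·(600/m)^{j−2}; (b) if 160 ≤ j ≤ m/10, then binom(m+1, j)·|Z_j·Z_{m+1−j}|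 ≤ binom(m+1, 1)·|Z₁·Z_m|·(1/m⁹)·(1/3)^j and binom(m+2, j)·|Z_j·Z_{m+2−j}| ≤ binom(m+2, 2)·|Z₂·Z_m|·(1/m⁹)·(1/3)^j; (c) if j ≥ m/10, then binom(m+1, j)·|Z_j·Z_{m+1−j}| ≤ binom(m+1, 1)·|Z₁·Z_m|·(3/4)^{j/11} and binom(m+2, j)·|Z_j·Z_{m+2−j}| ≤ binom(m+2, 2)·|Z₂·Z_m|·(3/4)^{j/11}. Moreover the first inequality of case (a) also holds for j = 1. -/
/-! Put `M = m + s` with `s = 1` or `s = 2`, and `B j = binom(M, j) |Z_j Z_{M-j}|`. Passing from `B j`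
to `B (j + 1)` uses the upper ratio bound for `Z_{j+1} / Z_j` and the lower one for
`Z_{M-j} / Z_{M-j-1}`. The constant `|C̄_*|` and the factor `k` cancel, and the denominators satisfy
`k - M + j ≤ k - j - 1` because `2j + 1 ≤ M`. This leaves (`step_aux`, `step_choose`)

* `(M - j) B (j + 1) ≤ 500 B j` for `s ≤ j < 160`;
* `(M - j) B (j + 1) ≤ 3 (j + 1) B j` for `160 ≤ j`, `2j + 1 ≤ M`.

Everything else follows from these two recursions (with `m > 10000`).

* For `j ≤ 160` each step gains a factor `600 / m`, which is (a).
* For `160 ≤ j ≤ m / 10` each step gains a factor `1 / 3`, and the gain `(600 / m) ^ (160 - s)`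
  accumulated up to `160` pays for `m ^ (-9)` and `3 ^ (-160)`; this is (b).
* For `j ≥ m / 10` the second recursion says that `binom(M, j) B j / 3 ^ j` is nonincreasing from
  `160` on. Since `j ≤ M / 2`, `binom(M, j) ≥ binom(2j, j) ≥ 4 ^ j / (2j + 1)`, so `B j` is at most
  `(2j + 1) (3 / 4) ^ j` times `(200.04 ^ 160 / 160!) (m / 600) ^ 2 B s`. As `m ≤ 10 j`, the factor
  `(3 / 4) ^ (10 j / 11)` outweighs the constant and the cubic growth in `j` once `j ≥ 1000`; this
  is (c).
-/

noncomputable section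

open Real

namespace SelfSimilarImplosion

/-- The constant `C̄_* = 0.95·(−29 + 12√5)/726`; it is negative and satisfies
`0.00283 < |C̄_*| < 0.00284`. -/
def Cbar : ℝ := 0.95 * ((-29 + 12 * Real.sqrt 5) / 726)

/-- One step `j → j + 1` for `|Z_j Z_{M-j}|`, where `M = m + s`: an upper bound on `|Z_{j+1}|` with
coefficient `U` combines with the lower bound on `|Z_{M-j}|`. The condition `s ≤ j` keeps `M - j ≤ m`,
hence `k - (M - j) > 0`. -/
lemma step_aux (Z : ℕ → ℝ) (k c U : ℝ) (m s j : ℕ) (hc : 0 ≤ c) (hU : 0 ≤ U)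
    (hk : (m : ℝ) < k) (hsj : s ≤ j) (hj : 2 * j + 1 ≤ m + s)
    (hup : |Z (j + 1)| ≤ U * c * k / |(j : ℝ) + 1 - k| * |Z j|)
    (hlo : c * (((m + s - (j + 1) : ℕ) : ℝ) + 1) ^ 2 * k / |((m + s - (j + 1) : ℕ) : ℝ) + 1 - k|
      * |Z (m + s - (j + 1))| ≤ |Z (m + s - (j + 1) + 1)|) :
    |Z (j + 1) * Z (m + s - (j + 1))| * ((m : ℝ) + s - j) ^ 2 ≤ U * |Z j * Z (m + s - j)| := by
  have e1 : m + s - (j + 1) + 1 = m + s - j := by omega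
  have e2 : ((m + s - (j + 1) : ℕ) : ℝ) + 1 = (m : ℝ) + s - j := by
    rw [Nat.cast_sub (by omega)]; push_cast; ring
  rw [e1, e2] at hlo
  have hsj' : (s : ℝ) ≤ j := by exact_mod_cast hsj
  have hj' : 2 * (j : ℝ) + 1 ≤ m + s := by exact_mod_cast hj
  have hk0 : 0 < k := lt_of_le_of_lt (Nat.cast_nonneg m) hk
  have d1 : 0 < k - ((m : ℝ) + s - j) := by linarith
  have d2 : k - ((m : ℝ) + s - j) ≤ k - (j + 1) := by linarith
  rw [abs_sub_comm, abs_of_pos d1] at hlo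
  rw [abs_sub_comm, abs_of_pos (lt_of_lt_of_le d1 d2)] at hup
  rw [abs_mul, abs_mul]
  set y := |Z (m + s - (j + 1))|
  have hy : 0 ≤ y := abs_nonneg _
  set w := (m : ℝ) + s - j
  calc |Z (j + 1)| * y * w ^ 2
      ≤ (U * c * k / (k - (j + 1)) * |Z j|) * y * w ^ 2 := by gcongr
    _ = U * |Z j| * (c * w ^ 2 * k / (k - (j + 1)) * y) := by ring
    _ ≤ U * |Z j| * (c * w ^ 2 * k / (k - w) * y) := by gcongr
    _ ≤ U * |Z j| * |Z (m + s - j)| := by gcongr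
    _ = _ := by ring

/-- The binomially weighted form of a step, obtained from
`binom(M, j + 1) (j + 1) = binom(M, j) (M - j)`. -/
lemma step_choose (M j : ℕ) (hj : j ≤ M) (D D' V : ℝ)
    (h : D' * ((M : ℝ) - j) ^ 2 ≤ V * ((j : ℝ) + 1) * D) :
    (M.choose (j + 1) * D') * ((M : ℝ) - j) ≤ V * (M.choose j * D) := by
  have hc : (M.choose (j + 1) : ℝ) * ((j : ℝ) + 1) = M.choose j * ((M : ℝ) - j) := by
    have := Nat.choose_succ_right_eq M j
    rw [← Nat.cast_sub hj]
    exact_mod_cast this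
  have hp : (0 : ℝ) < (j : ℝ) + 1 := by positivity
  refine le_of_mul_le_mul_right ?_ hp
  calc (M.choose (j + 1) * D') * ((M : ℝ) - j) * ((j : ℝ) + 1)
      = (M.choose (j + 1) * ((j : ℝ) + 1)) * D' * ((M : ℝ) - j) := by ring
    _ = M.choose j * (D' * ((M : ℝ) - j) ^ 2) := by rw [hc]; ring
    _ ≤ M.choose j * (V * ((j : ℝ) + 1) * D) := by gcongr
    _ = _ := by ring

lemma bound_a (B : ℕ → ℝ) (m s : ℕ) (hm : 10000 < m) (hB : ∀ j, 0 ≤ B j)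
    (h1 : ∀ j, s ≤ j → j < 160 → B (j + 1) * (((m + s : ℕ) : ℝ) - j) ≤ 500 * B j)
    (j : ℕ) (hsj : s ≤ j) (hj : j ≤ 160) :
    B j ≤ B s * (600 / (m : ℝ)) ^ (j - s) := by
  have hm' : (10000 : ℝ) < m := by exact_mod_cast hm
  induction j, hsj using Nat.le_induction with
  | base => simp
  | succ j hsj ih =>
    have ih := ih (by omega)
    have h := h1 j hsj (by omega)
    have hj' : (j : ℝ) + 1 ≤ 160 := by exact_mod_cast hj
    rw [Nat.succ_sub hsj, pow_succ]
    have key : B (j + 1) ≤ B j * (600 / (m : ℝ)) := by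
      rw [mul_div_assoc', le_div_iff₀ (by linarith)]
      push_cast at h
      have : B (j + 1) * (5 / 6 * m) ≤ B (j + 1) * ((m : ℝ) + s - j) := by
        apply mul_le_mul_of_nonneg_left _ (hB _)
        have : (0 : ℝ) ≤ s := by positivity
        linarith
      linarith
    calc B (j + 1) ≤ B j * (600 / (m : ℝ)) := key
      _ ≤ B s * (600 / (m : ℝ)) ^ (j - s) * (600 / (m : ℝ)) := by gcongr
      _ = _ := by ring

lemma bound_b (B : ℕ → ℝ) (m s : ℕ) (hm : 10000 < m) (hs : s ≤ 2) (hB : ∀ j, 0 ≤ B j)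
    (h1 : ∀ j, s ≤ j → j < 160 → B (j + 1) * (((m + s : ℕ) : ℝ) - j) ≤ 500 * B j)
    (h2 : ∀ j, 160 ≤ j → 2 * j + 1 ≤ m + s →
      B (j + 1) * (((m + s : ℕ) : ℝ) - j) ≤ 3 * ((j : ℝ) + 1) * B j)
    (j : ℕ) (hj : 160 ≤ j) (hjm : (j : ℝ) ≤ (m : ℝ) / 10) :
    B j ≤ B s * (1 / (m : ℝ) ^ 9) * (1 / 3 : ℝ) ^ j := by
  have hm' : (10000 : ℝ) < m := by exact_mod_cast hm
  have hm0 : (0 : ℝ) < m := by linarith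
  induction j, hj using Nat.le_induction with
  | base =>
    refine (bound_a B m s hm hB h1 160 (by omega) le_rfl).trans ?_
    rw [mul_assoc]
    refine mul_le_mul_of_nonneg_left ?_ (hB s)
    have hq : 600 / (m : ℝ) ≤ 6 / 100 := by
      rw [div_le_iff₀ hm0]; linarith
    -- nine of the `160 - s` factors `600 / m` produce `m ^ (-9)`; the others are at most `0.06`
    calc (600 / (m : ℝ)) ^ (160 - s) = (600 / (m : ℝ)) ^ (151 - s) * (600 / (m : ℝ)) ^ 9 := by
          rw [← pow_add]; congr 1; omega
      _ ≤ (6 / 100) ^ (151 - s) * (600 / (m : ℝ)) ^ 9 := by gcongr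
      _ ≤ (6 / 100) ^ 149 * (600 / (m : ℝ)) ^ 9 := by
          gcongr ?_ * _
          exact pow_le_pow_of_le_one (by norm_num) (by norm_num) (by omega)
      _ = 1 / (m : ℝ) ^ 9 * ((6 / 100) ^ 149 * 600 ^ 9) := by rw [div_pow]; ring
      _ ≤ 1 / (m : ℝ) ^ 9 * (1 / 3) ^ 160 := by gcongr ?_ * ?_; norm_num
  | succ j hj ih =>
    push_cast at hjm
    have ih := ih (by linarith)
    have h := h2 j hj (by
      have : 2 * (j : ℝ) + 1 ≤ m := by linarith
      have : 2 * j + 1 ≤ m := by exact_mod_cast this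
      omega)
    have key : B (j + 1) ≤ B j * (1 / 3) := by
      push_cast at h
      have hs0 : (0 : ℝ) ≤ s := by positivity
      have a1 : B (j + 1) * (9 / 10 * m) ≤ B (j + 1) * ((m : ℝ) + s - j) :=
        mul_le_mul_of_nonneg_left (by linarith) (hB _)
      have a2 : 3 * ((j : ℝ) + 1) * B j ≤ 3 * ((m : ℝ) / 10) * B j :=
        mul_le_mul_of_nonneg_right (by linarith) (hB _)
      refine le_of_mul_le_mul_right ?_ hm0
      linarith
    rw [pow_succ]
    calc B (j + 1) ≤ B j * (1 / 3) := key
      _ ≤ B s * (1 / (m : ℝ) ^ 9) * (1 / 3 : ℝ) ^ j * (1 / 3) := by gcongr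
      _ = _ := by ring

/-- The growth comparison behind case (c); `0.78` lies slightly above `(3 / 4) ^ (10 / 11)`. -/
lemma poly_le_geom (j : ℕ) (hj : 1000 ≤ j) :
    ((20004 / 100 : ℝ) ^ 160 / (Nat.factorial 160 : ℝ)) * (j : ℝ) ^ 3 * (78 / 100) ^ j ≤ 1200 := by
  induction j, hj using Nat.le_induction with
  | base =>
    have h : (78 / 100 : ℝ) ^ 1000 ≤ (84 / 1000) ^ 100 := by
      rw [show 1000 = 10 * 100 by norm_num, pow_mul]
      gcongr
      norm_num
    refine (mul_le_mul_of_nonneg_left h (by positivity)).trans ?_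
    norm_num [Nat.factorial]
  | succ j hj ih =>
    refine le_trans ?_ ih
    have hj' : (1000 : ℝ) ≤ j := by exact_mod_cast hj
    have : ((j : ℝ) + 1) ^ 3 * (78 / 100) ≤ (j : ℝ) ^ 3 := by
      have : (j : ℝ) + 1 ≤ 1001 / 1000 * j := by linarith
      calc ((j : ℝ) + 1) ^ 3 * (78 / 100) ≤ (1001 / 1000 * j) ^ 3 * (78 / 100) := by gcongr
        _ = (1001 / 1000) ^ 3 * (78 / 100) * (j : ℝ) ^ 3 := by ring
        _ ≤ 1 * (j : ℝ) ^ 3 := by gcongr; norm_num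
        _ = _ := one_mul _
    push_cast
    rw [pow_succ (78 / 100 : ℝ)]
    calc ((20004 / 100 : ℝ) ^ 160 / (Nat.factorial 160 : ℝ)) * ((j : ℝ) + 1) ^ 3
          * ((78 / 100) ^ j * (78 / 100))
        = ((20004 / 100 : ℝ) ^ 160 / (Nat.factorial 160 : ℝ))
          * (((j : ℝ) + 1) ^ 3 * (78 / 100)) * (78 / 100) ^ j := by ring
      _ ≤ _ := by gcongr

lemma three_quarters_pow_le (j : ℕ) :
    (3 / 4 : ℝ) ^ j ≤ (78 / 100) ^ j * (3 / 4 : ℝ) ^ ((j : ℝ) / 11) := by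
  have e : (3 / 4 : ℝ) ^ ((j : ℝ) / 11) = ((3 / 4 : ℝ) ^ ((1 : ℝ) / 11)) ^ j := by
    rw [← Real.rpow_natCast, ← Real.rpow_mul (by norm_num)]
    congr 1; ring
  rw [e, ← mul_pow]
  gcongr
  have ht : (75 / 78 : ℝ) ≤ (3 / 4 : ℝ) ^ ((1 : ℝ) / 11) := by
    have h0 : (0 : ℝ) ≤ (3 / 4 : ℝ) ^ ((1 : ℝ) / 11) := by positivity
    refine le_of_pow_le_pow_left₀ (n := 11) (by norm_num) h0 ?_
    rw [← Real.rpow_natCast ((3 / 4 : ℝ) ^ ((1 : ℝ) / 11)), ← Real.rpow_mul (by norm_num)]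
    norm_num
  linarith

/-- The numerical conclusion of case (c), with `b = B s`, `Q = 200.04 ^ 160 / 160!` and
`r = (3 / 4) ^ (j / 11)`. -/
lemma final_algebra (b Q r : ℝ) (j : ℕ) (hb : 0 ≤ b) (hQ : 0 ≤ Q) (hr : 0 ≤ r)
    (hq : (3 / 4 : ℝ) ^ j ≤ (78 / 100) ^ j * r) (hg : Q * (j : ℝ) ^ 3 * (78 / 100) ^ j ≤ 1200) :
    (3 * j) * (b * 3 ^ j * (Q * ((j : ℝ) / 60) ^ 2)) ≤ b * r * 4 ^ j := by
  have h34 : (3 : ℝ) ^ j = (3 / 4) ^ j * 4 ^ j := by rw [← mul_pow]; norm_num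
  calc (3 * j) * (b * 3 ^ j * (Q * ((j : ℝ) / 60) ^ 2))
      = b * (Q * (j : ℝ) ^ 3 / 1200) * 4 ^ j * (3 / 4) ^ j := by rw [h34]; ring
    _ ≤ b * (Q * (j : ℝ) ^ 3 / 1200) * 4 ^ j * ((78 / 100) ^ j * r) := by gcongr
    _ = b * r * 4 ^ j * (Q * (j : ℝ) ^ 3 * (78 / 100) ^ j / 1200) := by ring
    _ ≤ b * r * 4 ^ j * 1 := by gcongr; linarith
    _ = b * r * 4 ^ j := mul_one _

lemma bound_c (B : ℕ → ℝ) (m s : ℕ) (hm : 10000 < m) (hs : s ≤ 2) (hs1 : 1 ≤ s)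
    (hB : ∀ j, 0 ≤ B j)
    (h1 : ∀ j, s ≤ j → j < 160 → B (j + 1) * (((m + s : ℕ) : ℝ) - j) ≤ 500 * B j)
    (h2 : ∀ j, 160 ≤ j → 2 * j + 1 ≤ m + s →
      B (j + 1) * (((m + s : ℕ) : ℝ) - j) ≤ 3 * ((j : ℝ) + 1) * B j)
    (j : ℕ) (hjm : 2 * j ≤ m + 1) (hmj : m ≤ 10 * j) :
    B j ≤ B s * (3 / 4 : ℝ) ^ ((j : ℝ) / 11) := by
  have hm' : (10000 : ℝ) < m := by exact_mod_cast hm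
  have hm0 : (0 : ℝ) < m := by linarith
  have hmj' : (m : ℝ) ≤ 10 * j := by exact_mod_cast hmj
  have hj1 : (1000 : ℝ) ≤ j := by linarith
  -- `binom(M, i) B i / 3 ^ i` is nonincreasing for `i ≥ 160`
  have tele : ∀ i, 160 ≤ i → 2 * i ≤ m + 1 →
      B i * (m + s).choose i ≤ B 160 * 3 ^ (i - 160) * (m + s).choose 160 := by
    intro i hi
    induction i, hi using Nat.le_induction with
    | base => intro _; simp
    | succ i hi ih =>
      intro h
      have ih := ih (by omega)
      have hst := h2 i hi (by omega)
      have hc : ((m + s).choose (i + 1) : ℝ) * ((i : ℝ) + 1)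
          = (m + s).choose i * (((m + s : ℕ) : ℝ) - i) := by
        have := Nat.choose_succ_right_eq (m + s) i
        rw [← Nat.cast_sub (by omega)]
        exact_mod_cast this
      have hp : (0 : ℝ) < (i : ℝ) + 1 := by positivity
      have key : B (i + 1) * (m + s).choose (i + 1) ≤ 3 * (B i * (m + s).choose i) := by
        refine le_of_mul_le_mul_right ?_ hp
        calc B (i + 1) * (m + s).choose (i + 1) * ((i : ℝ) + 1)
            = (B (i + 1) * (((m + s : ℕ) : ℝ) - i)) * (m + s).choose i := by
              rw [mul_assoc, hc]; ring
          _ ≤ (3 * ((i : ℝ) + 1) * B i) * (m + s).choose i := by gcongr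
          _ = _ := by ring
      rw [Nat.succ_sub hi, pow_succ]
      linarith
  have t := tele j (by omega) hjm
  have ha := bound_a B m s hm hB h1 160 (by omega) le_rfl
  have hcen : (4 : ℝ) ^ j ≤ (2 * j + 1) * (m + s).choose j := by
    have a := Nat.four_pow_le_two_mul_add_one_mul_central_binom j
    have b : Nat.centralBinom j ≤ (m + s).choose j := by
      rw [Nat.centralBinom_eq_two_mul_choose]
      exact Nat.choose_le_choose j (by omega)
    exact_mod_cast a.trans (Nat.mul_le_mul_left _ b)
  have hM : (((m + s : ℕ) : ℝ)) ≤ 10002 / 10000 * m := by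
    have : (s : ℝ) ≤ 2 := by exact_mod_cast hs
    push_cast; linarith
  have hch : ((m + s).choose 160 : ℝ) ≤ (10002 / 10000 * m) ^ 160 / (Nat.factorial 160 : ℝ) := by
    refine (Nat.choose_le_pow_div 160 (m + s)).trans ?_
    gcongr
  -- `(m / 600) ^ s ≤ (m / 600) ^ 2 ≤ (j / 60) ^ 2`
  have hpow : (600 / (m : ℝ)) ^ (160 - s) ≤ (600 / (m : ℝ)) ^ 160 * ((j : ℝ) / 60) ^ 2 := by
    have e : (600 / (m : ℝ)) ^ (160 - s) = (600 / (m : ℝ)) ^ 160 * ((m : ℝ) / 600) ^ s := by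
      have : (600 / (m : ℝ)) ^ 160 = (600 / (m : ℝ)) ^ (160 - s) * (600 / (m : ℝ)) ^ s := by
        rw [← pow_add]; congr 1; omega
      rw [this, mul_assoc, ← mul_pow]
      have : 600 / (m : ℝ) * ((m : ℝ) / 600) = 1 := by field_simp
      rw [this]; simp
    rw [e]
    gcongr ?_ * ?_
    calc ((m : ℝ) / 600) ^ s ≤ ((m : ℝ) / 600) ^ 2 :=
          pow_le_pow_right₀ (by linarith) hs
      _ ≤ _ := by gcongr ?_ ^ 2; linarith
  have hq := three_quarters_pow_le j
  have hg := poly_le_geom j (by omega)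
  have hF0 : (0 : ℝ) < (Nat.factorial 160 : ℝ) := by exact_mod_cast Nat.factorial_pos 160
  have hr0 : 0 ≤ (3 / 4 : ℝ) ^ ((j : ℝ) / 11) := by positivity
  generalize (Nat.factorial 160 : ℝ) = F at hch hg hF0
  generalize (3 / 4 : ℝ) ^ ((j : ℝ) / 11) = r at hq hr0 ⊢
  have hBs := hB s
  have h4 : (0 : ℝ) < 4 ^ j := by positivity
  have ha' := ha.trans (mul_le_mul_of_nonneg_left hpow hBs)
  have hBj := hB j
  have hsplit : (3 : ℝ) ^ (j - 160) = 3 ^ j / 3 ^ 160 := by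
    rw [eq_div_iff (by positivity), ← pow_add]; congr 1; omega
  have hj3 : 2 * (j : ℝ) + 1 ≤ 3 * j := by linarith
  have t2 : B 160 * 3 ^ (j - 160) * (m + s).choose 160
      ≤ B s * 3 ^ j * ((20004 / 100 : ℝ) ^ 160 / F * ((j : ℝ) / 60) ^ 2) := by
    calc B 160 * 3 ^ (j - 160) * (m + s).choose 160
        ≤ (B s * ((600 / (m : ℝ)) ^ 160 * ((j : ℝ) / 60) ^ 2)) * 3 ^ (j - 160)
          * ((10002 / 10000 * m) ^ 160 / F) := by
          exact mul_le_mul (mul_le_mul_of_nonneg_right ha' (by positivity)) hch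
            (Nat.cast_nonneg _) (mul_nonneg ((hB 160).trans ha') (by positivity))
      _ = B s * 3 ^ j * ((600 / (m : ℝ) * (10002 / 10000 * m) / 3) ^ 160 / F
          * ((j : ℝ) / 60) ^ 2) := by
          rw [hsplit, div_pow (600 / (m : ℝ) * (10002 / 10000 * m)), mul_pow (600 / (m : ℝ))]
          generalize (600 / (m : ℝ)) ^ 160 = x
          generalize (10002 / 10000 * (m : ℝ)) ^ 160 = y
          generalize (3 : ℝ) ^ 160 = z
          ring
      _ = _ := by
          have : 600 / (m : ℝ) * (10002 / 10000 * m) / 3 = 20004 / 100 := by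
            field_simp; norm_num
          rw [this]
  have hQ : 0 ≤ (20004 / 100 : ℝ) ^ 160 / F := by positivity
  generalize (20004 / 100 : ℝ) ^ 160 / F = Q at hg t2 hQ
  refine le_of_mul_le_mul_right ?_ h4
  calc B j * 4 ^ j ≤ B j * ((2 * j + 1) * (m + s).choose j) :=
        mul_le_mul_of_nonneg_left hcen hBj
    _ = (2 * j + 1) * (B j * (m + s).choose j) := by ring
    _ ≤ (3 * j) * (B s * 3 ^ j * (Q * ((j : ℝ) / 60) ^ 2)) :=
        mul_le_mul hj3 (t.trans t2) (mul_nonneg hBj (Nat.cast_nonneg _)) (by positivity)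
    _ ≤ B s * r * 4 ^ j := final_algebra (B s) Q r j hBs hQ hr0 hq hg

/-- Lemma 5.2, convexity estimates: under the inductive ratio bounds on the
sequence `(Z_i)`, binomially weighted products `binom(m+1,j)|Z_j Z_{m+1-j}|` (and the
`m+2`-versions) are controlled in the three regimes `j < 160`, `160 ≤ j ≤ m/10`, `j ≥ m/10`. -/
theorem statement18 (Z : ℕ → ℝ) (k : ℝ) (m n : ℕ)
    (hm : 10000 < m) (hmn : m ≤ n) (hnk : (n : ℝ) < k)
    (hyp : ∀ i : ℕ, 1 ≤ i → i ≤ m →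
      (i < 160 →
        |Cbar| * ((i : ℝ) + 1) ^ 2 * k / |(i : ℝ) + 1 - k| * |Z i| ≤ |Z (i + 1)| ∧
        |Z (i + 1)| ≤ 500 * |Cbar| * ((i : ℝ) + 1) * k / |(i : ℝ) + 1 - k| * |Z i|) ∧
      (160 ≤ i →
        |Cbar| * ((i : ℝ) + 1) ^ 2 * k / |(i : ℝ) + 1 - k| * |Z i| ≤ |Z (i + 1)| ∧
        |Z (i + 1)| ≤ 3 * |Cbar| * ((i : ℝ) + 1) ^ 2 * k / |(i : ℝ) + 1 - k| * |Z i|) ∧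
      (10000 < i →
        |Z (i + 1) - Cbar * ((i : ℝ) + 1) ^ 2 * k / ((i : ℝ) + 1 - k) * Z i| ≤
          0.05 * |Z (i + 1)|)) :
    (∀ j : ℕ, 2 ≤ j → (j : ℝ) ≤ ((m : ℝ) + 1) / 2 →
      (j < 160 →
        (Nat.choose (m + 1) j : ℝ) * |Z j * Z (m + 1 - j)| ≤
          (Nat.choose (m + 1) 1 : ℝ) * |Z 1 * Z m| * (600 / (m : ℝ)) ^ (j - 1) ∧
        (Nat.choose (m + 2) j : ℝ) * |Z j * Z (m + 2 - j)| ≤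
          (Nat.choose (m + 2) 2 : ℝ) * |Z 2 * Z m| * (600 / (m : ℝ)) ^ (j - 2)) ∧
      (160 ≤ j → (j : ℝ) ≤ (m : ℝ) / 10 →
        (Nat.choose (m + 1) j : ℝ) * |Z j * Z (m + 1 - j)| ≤
          (Nat.choose (m + 1) 1 : ℝ) * |Z 1 * Z m| * (1 / (m : ℝ) ^ 9) * (1 / 3 : ℝ) ^ j ∧
        (Nat.choose (m + 2) j : ℝ) * |Z j * Z (m + 2 - j)| ≤
          (Nat.choose (m + 2) 2 : ℝ) * |Z 2 * Z m| * (1 / (m : ℝ) ^ 9) * (1 / 3 : ℝ) ^ j) ∧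
      ((m : ℝ) / 10 ≤ (j : ℝ) →
        (Nat.choose (m + 1) j : ℝ) * |Z j * Z (m + 1 - j)| ≤
          (Nat.choose (m + 1) 1 : ℝ) * |Z 1 * Z m| * ((3 / 4 : ℝ) ^ ((j : ℝ) / 11)) ∧
        (Nat.choose (m + 2) j : ℝ) * |Z j * Z (m + 2 - j)| ≤
          (Nat.choose (m + 2) 2 : ℝ) * |Z 2 * Z m| * ((3 / 4 : ℝ) ^ ((j : ℝ) / 11)))) ∧
    (Nat.choose (m + 1) 1 : ℝ) * |Z 1 * Z (m + 1 - 1)| ≤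
      (Nat.choose (m + 1) 1 : ℝ) * |Z 1 * Z m| * (600 / (m : ℝ)) ^ (1 - 1) := by
  have hmk : (m : ℝ) < k := lt_of_le_of_lt (by exact_mod_cast hmn) hnk
  have main : ∀ s, 1 ≤ s → s ≤ 2 →
      (∀ j, s ≤ j → j < 160 →
        ((m + s).choose (j + 1) * |Z (j + 1) * Z (m + s - (j + 1))|) * (((m + s : ℕ) : ℝ) - j)
          ≤ 500 * ((m + s).choose j * |Z j * Z (m + s - j)|)) ∧
      (∀ j, 160 ≤ j → 2 * j + 1 ≤ m + s →
        ((m + s).choose (j + 1) * |Z (j + 1) * Z (m + s - (j + 1))|) * (((m + s : ℕ) : ℝ) - j)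
          ≤ 3 * ((j : ℝ) + 1) * ((m + s).choose j * |Z j * Z (m + s - j)|)) := by
    intro s hs1 hs2
    have lower : ∀ i, 1 ≤ i → i ≤ m →
        |Cbar| * ((i : ℝ) + 1) ^ 2 * k / |(i : ℝ) + 1 - k| * |Z i| ≤ |Z (i + 1)| := by
      intro i hi him
      rcases lt_or_ge i 160 with h | h
      · exact ((hyp i hi him).1 h).1
      · exact ((hyp i hi him).2.1 h).1
    refine ⟨fun j hsj hj => ?_, fun j hj hjm => ?_⟩
    · apply step_choose _ _ (by omega)
      have := step_aux Z k |Cbar| (500 * ((j : ℝ) + 1)) m s j (abs_nonneg _) (by positivity) hmk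
        hsj (by omega)
        (by
          convert ((hyp j (by omega) (by omega)).1 hj).2 using 3
          ring)
        (lower _ (by omega) (by omega))
      push_cast
      exact this
    · apply step_choose _ _ (by omega)
      have := step_aux Z k |Cbar| (3 * ((j : ℝ) + 1) ^ 2) m s j (abs_nonneg _) (by positivity) hmk
        (by omega) hjm
        (by
          convert ((hyp j (by omega) (by omega)).2.1 hj).2 using 3
          ring)
        (lower _ (by omega) (by omega))
      push_cast
      linarith
  obtain ⟨p1, p2⟩ := main 1 le_rfl (by norm_num)
  obtain ⟨q1, q2⟩ := main 2 (by norm_num) le_rfl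
  have hB : ∀ s j, 0 ≤ ((m + s).choose j : ℝ) * |Z j * Z (m + s - j)| := fun s j => by positivity
  have e1 : m + 1 - 1 = m := by omega
  have e2 : m + 2 - 2 = m := by omega
  refine ⟨fun j hj hjm => ⟨fun h => ⟨?_, ?_⟩, fun h h' => ⟨?_, ?_⟩, fun h => ?_⟩, by simp⟩
  · simpa only [e1] using bound_a (fun j => (m + 1).choose j * |Z j * Z (m + 1 - j)|) m 1 hm (hB 1)
      p1 j (by omega) h.le
  · simpa only [e2] using bound_a (fun j => (m + 2).choose j * |Z j * Z (m + 2 - j)|) m 2 hm (hB 2)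
      q1 j hj h.le
  · simpa only [e1] using bound_b (fun j => (m + 1).choose j * |Z j * Z (m + 1 - j)|) m 1 hm
      (by norm_num) (hB 1) p1 p2 j h h'
  · simpa only [e2] using bound_b (fun j => (m + 2).choose j * |Z j * Z (m + 2 - j)|) m 2 hm
      le_rfl (hB 2) q1 q2 j h h'
  · have a1 : 2 * j ≤ m + 1 := by
      have : 2 * (j : ℝ) ≤ m + 1 := by linarith
      exact_mod_cast this
    have a2 : m ≤ 10 * j := by
      have : (m : ℝ) ≤ 10 * j := by linarith
      exact_mod_cast this
    constructor
    · simpa only [e1] using bound_c (fun j => (m + 1).choose j * |Z j * Z (m + 1 - j)|) m 1 hm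
        (by norm_num) le_rfl (hB 1) p1 p2 j a1 a2
    · simpa only [e2] using bound_c (fun j => (m + 2).choose j * |Z j * Z (m + 2 - j)|) m 2 hm
        le_rfl (by norm_num) (hB 2) q1 q2 j a1 a2

end SelfSimilarImplosion
end
end

section
/- Let n ∈ ℕ with n ≥ 1, let β₁ ∈ (0, 1) and β₂ ∈ ℝ. There exists a constant C > 0, depending only on n, β₁ and β₂, such that for every a ≥ 1, every integer i with 0 ≤ i ≤ n, and every n-times continuously differentiable function f : [a, ∞) → ℝ, one has sup_{x ≥ a} x^{iβ₁+β₂}·|f^{(i)}(x)| ≤ C·( (sup_{x ≥ a} x^{β₂}·|f(x)|)^{1−i/n}·(sup_{x ≥ a} x^{nβ₁+β₂}·|f^{(n)}(x)|)^{i/n} + sup_{x ≥ a} x^{β₂}·|f(x)| ). -/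
/-!
The inequality is the classical one, applied on intervals whose length is adapted to the weight.

Fix `x ≥ a` and let `h = t * x ^ β₁` with `0 < t ≤ 1`. As `β₁ < 1` and `x ≥ 1`, the interval `[x, x + h]`
lies in `[x, 2 x]`, so on it every power weight is comparable to its value at `x`
(`rpow_neg_le_of_le_two_mul`). The Taylor polynomial of degree `< n` at `x`, rescaled to the
variable `(y - x) / h`, differs from `f` by at most `sup |f⁽ⁿ⁾| * h ^ n`, so it is controlled at
the `n` nodes `k / n`; Lagrange interpolation (`exists_coeff_bound`) then controls its
coefficients `f⁽ⁱ⁾(x) h ^ i / i!`. This is `exists_local_bound`: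
`|f⁽ⁱ⁾(x)| h ^ i ≤ K (sup |f| + sup |f⁽ⁿ⁾| h ^ n)`. Restoring the weights turns it into
`x ^ (i β₁ + β₂) |f⁽ⁱ⁾(x)| t ^ i ≤ K' (A + B t ^ n)`, where `A` and `B` are the weighted bounds
on `f` and `f⁽ⁿ⁾`, and `t = min 1 ((A / B) ^ (1 / n))` gives the claim when `0 < A < ∞` and
`B < ∞`. The endpoint orders `i = 0`, `i = n` and the degenerate values of `A`, `B` are immediate
(if `A = 0`, then `f` vanishes on `[a, ∞)`).
-/

noncomputable section

open Real Set

namespace SelfSimilarImplosion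

open Polynomial in
/-- The coefficients of a polynomial of degree `< n` are bounded by its values at the nodes
`k / n`, `k < n`, with a constant depending only on `n`. -/
lemma exists_coeff_bound (n : ℕ) (hn : 1 ≤ n) :
    ∃ K : ℝ, 0 < K ∧ ∀ (p : ℝ[X]), p.degree < n → ∀ M : ℝ,
      (∀ k < n, |p.eval ((k : ℝ) / n)| ≤ M) → ∀ i < n, |p.coeff i| ≤ K * M := by
  have hn0 : (n : ℝ) ≠ 0 := by positivity
  let v : ℕ → ℝ := fun k => (k : ℝ) / n
  have hv : Set.InjOn v (Finset.range n : Set ℕ) := by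
    intro j _ k _ hjk
    have : (j : ℝ) = k := by simpa [v, hn0, div_left_inj'] using hjk
    exact_mod_cast this
  let S : ℕ → ℝ := fun i => ∑ k ∈ Finset.range n, |(Lagrange.basis (Finset.range n) v k).coeff i|
  have hS : ∀ i, 0 ≤ S i := fun i => Finset.sum_nonneg fun _ _ => abs_nonneg _
  refine ⟨1 + ∑ i ∈ Finset.range n, S i,
    by have := Finset.sum_nonneg (s := Finset.range n) fun i _ => hS i; linarith, ?_⟩
  intro p hp M hM i hi
  have hM0 : 0 ≤ M := (abs_nonneg _).trans (hM 0 (by omega))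
  have hp' := Lagrange.eq_interpolate (f := p) hv (by simpa using hp)
  have hc : p.coeff i = ∑ k ∈ Finset.range n,
      p.eval (v k) * (Lagrange.basis (Finset.range n) v k).coeff i := by
    conv_lhs => rw [hp']
    simp [Lagrange.interpolate_apply]
  have h1 : |p.coeff i| ≤ S i * M := by
    rw [hc]
    refine (Finset.abs_sum_le_sum_abs _ _).trans ?_
    rw [Finset.sum_mul]
    refine Finset.sum_le_sum fun k hk => ?_
    rw [abs_mul, mul_comm]
    exact mul_le_mul_of_nonneg_left (hM k (Finset.mem_range.1 hk)) (abs_nonneg _)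
  have h2 : S i ≤ ∑ i ∈ Finset.range n, S i :=
    Finset.single_le_sum (fun i _ => hS i) (Finset.mem_range.2 hi)
  exact h1.trans (mul_le_mul_of_nonneg_right (by linarith) hM0)

lemma iteratedDerivWithin_Icc_eq {f : ℝ → ℝ} {a x h y : ℝ} {m n : ℕ} (hmn : m ≤ n) (hax : a ≤ x)
    (hh : 0 < h) (hf : ContDiffOn ℝ n f (Ici a)) (hy : y ∈ Icc x (x + h)) :
    iteratedDerivWithin m f (Icc x (x + h)) y = iteratedDerivWithin m f (Ici a) y := by
  rw [iteratedDerivWithin_eq_iteratedFDerivWithin, iteratedDerivWithin_eq_iteratedFDerivWithin,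
    iteratedFDerivWithin_subset (t := Ici a) (fun z hz => hax.trans hz.1) (uniqueDiffOn_Icc (by linarith))
      (uniqueDiffOn_Ici a) (hf.of_le (by exact_mod_cast hmn)) hy]

/-- Unweighted interpolation on an interval of length `h`, in scale-invariant form. -/
lemma exists_local_bound (n : ℕ) (hn : 1 ≤ n) :
    ∃ K : ℝ, 0 < K ∧ ∀ (f : ℝ → ℝ) (a x h A B : ℝ), a ≤ x → 0 < h →
      ContDiffOn ℝ n f (Ici a) → (∀ y ∈ Icc x (x + h), |f y| ≤ A) →
      (∀ y ∈ Icc x (x + h), |iteratedDerivWithin n f (Ici a) y| ≤ B) →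
      ∀ i < n, |iteratedDerivWithin i f (Ici a) x| * h ^ i ≤ K * (A + B * h ^ n) := by
  obtain ⟨K, hK, hc⟩ := exists_coeff_bound n hn
  refine ⟨n.factorial * K, by positivity, ?_⟩
  intro f a x h A B hax hh hf hA hB i hi
  obtain ⟨m, rfl⟩ : ∃ m, n = m + 1 := ⟨n - 1, by omega⟩
  have hxm : x ∈ Icc x (x + h) := ⟨le_rfl, by linarith⟩
  have hB0 : 0 ≤ B := (abs_nonneg _).trans (hB x hxm)
  have hA0 : 0 ≤ A := (abs_nonneg _).trans (hA x hxm)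
  -- the Taylor polynomial at `x` in the variable `(y - x) / h`
  let c : ℕ → ℝ := fun j => iteratedDerivWithin j f (Ici a) x * h ^ j / j.factorial
  let p : Polynomial ℝ := ∑ j ∈ Finset.range (m + 1), Polynomial.monomial j (c j)
  have hpc : ∀ j < m + 1, p.coeff j = c j := by
    intro j hj
    simp [p, Polynomial.coeff_monomial, hj]
  have hdeg : p.degree < ((m + 1 : ℕ) : WithBot ℕ) := by
    refine (Polynomial.degree_sum_le _ _).trans_lt ?_
    rw [Finset.sup_lt_iff (by exact WithBot.bot_lt_coe _)]
    intro j hj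
    refine (Polynomial.degree_monomial_le _ _).trans_lt ?_
    exact_mod_cast Finset.mem_range.1 hj
  have hval : ∀ k < m + 1, |p.eval ((k : ℝ) / (m + 1 : ℕ))| ≤ A + B * h ^ (m + 1) := by
    intro k hk
    set s : ℝ := (k : ℝ) / (m + 1 : ℕ) with hs
    have hs0 : 0 ≤ s := by positivity
    have hs1 : s ≤ 1 := by
      rw [hs, div_le_one (by positivity)]
      exact_mod_cast hk.le
    have hmem : x + s * h ∈ Icc x (x + h) := ⟨by nlinarith, by nlinarith⟩
    have hev : p.eval s = taylorWithinEval f m (Icc x (x + h)) x (x + s * h) := by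
      rw [taylor_within_apply, Polynomial.eval_finsetSum]
      refine Finset.sum_congr rfl fun j hj => ?_
      rw [iteratedDerivWithin_Icc_eq (by have := Finset.mem_range.1 hj; omega) hax hh hf hxm,
        Polynomial.eval_monomial, smul_eq_mul, add_sub_cancel_left, mul_pow]
      simp only [c]
      ring
    have ht := taylor_mean_remainder_bound (f := f) (n := m) (C := B) (by linarith : x ≤ x + h)
      (by exact_mod_cast hf.mono (Icc_subset_Ici_self.trans (Ici_subset_Ici.2 hax))) hmem
      (fun y hy => by
        rw [iteratedDerivWithin_Icc_eq le_rfl hax hh hf hy]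
        exact hB y hy)
    rw [← hev, Real.norm_eq_abs, add_sub_cancel_left] at ht
    have h1 : B * (s * h) ^ (m + 1) / m.factorial ≤ B * h ^ (m + 1) := by
      refine (div_le_self (by positivity) (by exact_mod_cast m.factorial_pos)).trans ?_
      refine mul_le_mul_of_nonneg_left (pow_le_pow_left₀ (by positivity) ?_ _) hB0
      nlinarith
    have h2 := hA _ hmem
    have h3 := abs_sub_abs_le_abs_sub (p.eval s) (f (x + s * h))
    rw [abs_sub_comm] at h3
    linarith
  have h1 := hc p hdeg _ hval i hi
  rw [hpc i hi] at h1
  have h2 : |iteratedDerivWithin i f (Ici a) x| * h ^ i = i.factorial * |c i| := by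
    have : (0 : ℝ) < i.factorial := by positivity
    simp only [c]
    rw [abs_div, abs_mul, abs_of_pos this, abs_of_pos (pow_pos hh i)]
    field_simp
  rw [h2, mul_assoc]
  have h3 : (i.factorial : ℝ) ≤ (m + 1).factorial := by
    exact_mod_cast Nat.factorial_le hi.le
  exact mul_le_mul h3 h1 (abs_nonneg _) (by positivity)

lemma rpow_neg_le_of_le_two_mul {x y : ℝ} (γ : ℝ) (hx : 1 ≤ x) (hxy : x ≤ y) (hy : y ≤ 2 * x) :
    y ^ (-γ) ≤ 2 ^ |γ| * x ^ (-γ) := by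
  have hx0 : 0 < x := by linarith
  have h1 : 1 ≤ y / x := (one_le_div hx0).2 hxy
  have h2 : y / x ≤ 2 := (div_le_iff₀ hx0).2 hy
  have h3 : (y / x) ^ (-γ) ≤ 2 ^ |γ| :=
    (Real.rpow_le_rpow_of_exponent_le h1 (neg_le_abs γ)).trans
      (Real.rpow_le_rpow (by linarith) h2 (abs_nonneg γ))
  rwa [Real.div_rpow (by linarith) hx0.le, div_le_iff₀ (by positivity)] at h3

/-- A weighted bound by `M` at a point `y ∈ [x, 2 x]` gives an unweighted one in terms of `x`. -/
lemma abs_le_of_weighted {x y u M : ℝ} (γ : ℝ) (hx : 1 ≤ x) (hxy : x ≤ y) (hy : y ≤ 2 * x)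
    (h : y ^ γ * |u| ≤ M) : |u| ≤ 2 ^ |γ| * x ^ (-γ) * M := by
  have hy0 : 0 < y := by linarith
  have hM : 0 ≤ M := (by positivity : 0 ≤ y ^ γ * |u|).trans h
  have h1 : |u| = y ^ (-γ) * (y ^ γ * |u|) := by
    rw [← mul_assoc, ← Real.rpow_add hy0]
    simp
  rw [h1]
  exact mul_le_mul (rpow_neg_le_of_le_two_mul γ hx hxy hy) h (by positivity) (by positivity)

/-- Weighted interpolation with a free scale parameter `t ∈ (0, 1]`. -/
lemma exists_weighted_bound (n : ℕ) (hn : 1 ≤ n) (β₁ β₂ : ℝ) (hβ₁ : β₁ ≤ 1) :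
    ∃ K : ℝ, 0 < K ∧ ∀ (f : ℝ → ℝ) (a A B : ℝ), 1 ≤ a →
      ContDiffOn ℝ n f (Ici a) → (∀ y ∈ Ici a, y ^ β₂ * |f y| ≤ A) →
      (∀ y ∈ Ici a, y ^ ((n : ℝ) * β₁ + β₂) * |iteratedDerivWithin n f (Ici a) y| ≤ B) →
      ∀ t : ℝ, 0 < t → t ≤ 1 → ∀ i < n, ∀ x ∈ Ici a,
        x ^ ((i : ℝ) * β₁ + β₂) * |iteratedDerivWithin i f (Ici a) x| * t ^ i
          ≤ K * (A + B * t ^ n) := by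
  obtain ⟨K, hK, hloc⟩ := exists_local_bound n hn
  set γ : ℝ := (n : ℝ) * β₁ + β₂ with hγ
  refine ⟨K * (2 ^ |β₂| + 2 ^ |γ|), by positivity, ?_⟩
  intro f a A B ha hf hA hB t ht ht1 i hi x hx
  have hx1 : 1 ≤ x := ha.trans hx
  have hx0 : 0 < x := by linarith
  have hA0 : 0 ≤ A := (by positivity : 0 ≤ x ^ β₂ * |f x|).trans (hA x hx)
  have hB0 : 0 ≤ B :=
    (by positivity : 0 ≤ x ^ γ * |iteratedDerivWithin n f (Ici a) x|).trans (hB x hx)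
  have hw : x ^ β₁ ≤ x := by
    simpa using Real.rpow_le_rpow_of_exponent_le hx1 hβ₁
  have hw0 : 0 < x ^ β₁ := by positivity
  have hth : t * x ^ β₁ ≤ x := by nlinarith
  have key := hloc f a x (t * x ^ β₁) (2 ^ |β₂| * x ^ (-β₂) * A) (2 ^ |γ| * x ^ (-γ) * B) hx
    (by positivity) hf
    (fun y hy => abs_le_of_weighted β₂ hx1 hy.1 (by linarith [hy.2])
      (hA y (le_trans hx hy.1)))
    (fun y hy => abs_le_of_weighted γ hx1 hy.1 (by linarith [hy.2])
      (hB y (le_trans hx hy.1))) i hi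
  have hpow : ∀ j : ℕ, (x ^ β₁) ^ j = x ^ ((j : ℝ) * β₁) := by
    intro j
    rw [mul_comm, Real.rpow_mul hx0.le, Real.rpow_natCast]
  have e1 : x ^ ((i : ℝ) * β₁ + β₂) * |iteratedDerivWithin i f (Ici a) x| * t ^ i
      = x ^ β₂ * (|iteratedDerivWithin i f (Ici a) x| * (t * x ^ β₁) ^ i) := by
    rw [Real.rpow_add hx0, mul_pow, hpow]
    ring
  have e2 : x ^ β₂ * (K * (2 ^ |β₂| * x ^ (-β₂) * A + 2 ^ |γ| * x ^ (-γ) * B * (t * x ^ β₁) ^ n))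
      = K * (2 ^ |β₂| * A + 2 ^ |γ| * (B * t ^ n)) := by
    have h1 : x ^ β₂ * x ^ (-β₂) = 1 := by
      rw [← Real.rpow_add hx0]
      simp
    have h2 : x ^ β₂ * x ^ (-γ) * (x ^ β₁) ^ n = 1 := by
      rw [hpow, ← Real.rpow_add hx0, ← Real.rpow_add hx0, hγ]
      ring_nf
      simp
    rw [mul_pow]
    linear_combination (K * 2 ^ |β₂| * A) * h1 + (K * 2 ^ |γ| * B * t ^ n) * h2
  rw [e1]
  refine (mul_le_mul_of_nonneg_left key (by positivity)).trans ?_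
  rw [e2, mul_assoc]
  refine mul_le_mul_of_nonneg_left ?_ hK.le
  have q1 : (0 : ℝ) < 2 ^ |β₂| := by positivity
  have q2 : (0 : ℝ) < 2 ^ |γ| := by positivity
  have q3 : 0 ≤ B * t ^ n := by positivity
  nlinarith [mul_nonneg q1.le q3, mul_nonneg q2.le hA0]

/-- Optimisation over the scale: `t = 1` if `B ≤ A`, and `t = (A / B) ^ (1 / n)` otherwise. -/
lemma le_of_forall_scale {n i : ℕ} (hi : i < n) {A B K u : ℝ} (hA : 0 < A) (hB : 0 ≤ B)
    (hK : 0 < K) (h : ∀ t : ℝ, 0 < t → t ≤ 1 → u * t ^ i ≤ K * (A + B * t ^ n)) :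
    u ≤ 2 * K * (A ^ (1 - (i : ℝ) / n) * B ^ ((i : ℝ) / n) + A) := by
  have hn0 : (n : ℝ) ≠ 0 := by
    have : n ≠ 0 := by omega
    exact_mod_cast this
  rcases le_or_gt B A with hBA | hAB
  · have h1 := h 1 one_pos le_rfl
    simp only [one_pow, mul_one] at h1
    have h2 : 0 ≤ A ^ (1 - (i : ℝ) / n) * B ^ ((i : ℝ) / n) := by positivity
    nlinarith
  · have hB' : 0 < B := hA.trans hAB
    set t : ℝ := (A / B) ^ ((n : ℝ)⁻¹) with ht
    have ht0 : 0 < t := by positivity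
    have ht1 : t ≤ 1 :=
      Real.rpow_le_one (by positivity) ((div_le_one hB').2 hAB.le) (by positivity)
    have htn : B * t ^ n = A := by
      rw [ht, ← Real.rpow_natCast, ← Real.rpow_mul (by positivity), inv_mul_cancel₀ hn0,
        Real.rpow_one]
      field_simp
    have hti : A ^ (1 - (i : ℝ) / n) * B ^ ((i : ℝ) / n) * t ^ i = A := by
      rw [ht, ← Real.rpow_natCast, ← Real.rpow_mul (by positivity),
        show (n : ℝ)⁻¹ * i = (i : ℝ) / n by ring, Real.div_rpow hA.le hB'.le,
        Real.rpow_sub hA, Real.rpow_one]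
      field_simp
    have h1 := h t ht0 ht1
    rw [htn] at h1
    have h2 : u * t ^ i ≤ 2 * K * (A ^ (1 - (i : ℝ) / n) * B ^ ((i : ℝ) / n)) * t ^ i := by
      rw [mul_assoc (2 * K), hti]
      linarith
    have h3 := le_of_mul_le_mul_right h2 (by positivity)
    nlinarith

/-- Lemma A.11, weighted Kolmogorov–Landau interpolation on a half-line:
for `n ≥ 1`, `β₁ ∈ (0,1)`, `β₂ ∈ ℝ` there is a constant `C` (depending only on `n, β₁, β₂`)
such that for every `a ≥ 1`, `0 ≤ i ≤ n` and every `n`-times continuously differentiable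
`f : [a,∞) → ℝ`,
`sup x^{iβ₁+β₂}|f^{(i)}| ≤ C((sup x^{β₂}|f|)^{1−i/n}(sup x^{nβ₁+β₂}|f^{(n)}|)^{i/n}
  + sup x^{β₂}|f|)`,
the suprema being taken in `[0,∞]`. -/
theorem statement19 (n : ℕ) (hn : 1 ≤ n) (β₁ β₂ : ℝ) (hβ₁ : β₁ ∈ Set.Ioo (0 : ℝ) 1) :
    ∃ C : ℝ, 0 < C ∧
      ∀ a : ℝ, 1 ≤ a → ∀ i : ℕ, i ≤ n → ∀ f : ℝ → ℝ,
        ContDiffOn ℝ n f (Set.Ici a) →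
        (⨆ x ∈ Set.Ici a,
            ENNReal.ofReal (x ^ ((i : ℝ) * β₁ + β₂) * |iteratedDerivWithin i f (Set.Ici a) x|))
          ≤ ENNReal.ofReal C *
            ((⨆ x ∈ Set.Ici a, ENNReal.ofReal (x ^ β₂ * |f x|)) ^ (1 - (i : ℝ) / (n : ℝ))
              * (⨆ x ∈ Set.Ici a,
                  ENNReal.ofReal
                    (x ^ ((n : ℝ) * β₁ + β₂) * |iteratedDerivWithin n f (Set.Ici a) x|))
                ^ ((i : ℝ) / (n : ℝ))
              + ⨆ x ∈ Set.Ici a, ENNReal.ofReal (x ^ β₂ * |f x|)) := by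
  obtain ⟨K, hK, hw⟩ := exists_weighted_bound n hn β₁ β₂ hβ₁.2.le
  refine ⟨2 * K + 1, by positivity, ?_⟩
  intro a ha i hi f hf
  have hn0 : (n : ℝ) ≠ 0 := by positivity
  have hC1 : (1 : ENNReal) ≤ ENNReal.ofReal (2 * K + 1) := by
    rw [ENNReal.one_le_ofReal]
    linarith
  have hC0 : ENNReal.ofReal (2 * K + 1) ≠ 0 := (zero_lt_one.trans_le hC1).ne'
  set A : ENNReal := ⨆ x ∈ Ici a, ENNReal.ofReal (x ^ β₂ * |f x|) with hA
  set B : ENNReal := ⨆ x ∈ Ici a,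
    ENNReal.ofReal (x ^ ((n : ℝ) * β₁ + β₂) * |iteratedDerivWithin n f (Ici a) x|) with hB
  rcases hi.eq_or_lt with rfl | hin
  · rw [div_self hn0, sub_self, ENNReal.rpow_zero, ENNReal.rpow_one, one_mul]
    exact le_self_add.trans (le_mul_of_one_le_left zero_le hC1)
  rcases Nat.eq_zero_or_pos i with rfl | hi0
  · simp only [Nat.cast_zero, zero_mul, zero_add, iteratedDerivWithin_zero]
    exact le_add_self.trans (le_mul_of_one_le_left zero_le hC1)
  rcases eq_or_ne A ⊤ with hAt | hAt
  · rw [hAt, add_top, ENNReal.mul_top hC0]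
    exact le_top
  have hAx : ∀ y ∈ Ici a, y ^ β₂ * |f y| ≤ A.toReal := fun y hy =>
    (ENNReal.ofReal_le_iff_le_toReal hAt).1
      (le_iSup₂ (f := fun x (_ : x ∈ Ici a) => ENNReal.ofReal (x ^ β₂ * |f x|)) y hy)
  rcases eq_or_ne A 0 with hA0 | hA0
  · have hf0 : EqOn f (0 : ℝ → ℝ) (Ici a) := by
      intro y hy
      have hy0 : 0 < y := by linarith [mem_Ici.1 hy]
      have h1 := hAx y hy
      rw [hA0, ENNReal.toReal_zero] at h1
      have h2 : 0 < y ^ β₂ := by positivity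
      exact abs_nonpos_iff.1 (by nlinarith [abs_nonneg (f y)])
    refine iSup₂_le fun x hx => ?_
    rw [iteratedDerivWithin_congr hf0 hx]
    simp
  have hir : 0 < (i : ℝ) / n := by positivity
  rcases eq_or_ne B ⊤ with hBt | hBt
  · have h1 : A ^ (1 - (i : ℝ) / n) ≠ 0 := by
      simp [ENNReal.rpow_eq_zero_iff, hA0, hAt]
    rw [hBt, ENNReal.top_rpow_of_pos hir, ENNReal.mul_top h1, top_add, ENNReal.mul_top hC0]
    exact le_top
  have hBx : ∀ y ∈ Ici a,
      y ^ ((n : ℝ) * β₁ + β₂) * |iteratedDerivWithin n f (Ici a) y| ≤ B.toReal := fun y hy =>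
    (ENNReal.ofReal_le_iff_le_toReal hBt).1
      (le_iSup₂ (f := fun x (_ : x ∈ Ici a) => ENNReal.ofReal
        (x ^ ((n : ℝ) * β₁ + β₂) * |iteratedDerivWithin n f (Ici a) x|)) y hy)
  have hApos : 0 < A.toReal := ENNReal.toReal_pos hA0 hAt
  refine iSup₂_le fun x hx => ?_
  have key := le_of_forall_scale hin hApos ENNReal.toReal_nonneg hK fun t ht ht1 =>
    hw f a A.toReal B.toReal ha hf hAx hBx t ht ht1 i hin x hx
  have hr : 0 ≤ 1 - (i : ℝ) / n := by
    rw [sub_nonneg, div_le_one (by positivity)]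
    exact_mod_cast hi
  have hq : 0 ≤ A.toReal ^ (1 - (i : ℝ) / n) * B.toReal ^ ((i : ℝ) / n) := by positivity
  have e : ENNReal.ofReal (2 * K + 1) * (A ^ (1 - (i : ℝ) / n) * B ^ ((i : ℝ) / n) + A)
      = ENNReal.ofReal ((2 * K + 1) *
        (A.toReal ^ (1 - (i : ℝ) / n) * B.toReal ^ ((i : ℝ) / n) + A.toReal)) := by
    rw [ENNReal.ofReal_mul (by positivity), ENNReal.ofReal_add hq hApos.le,
      ENNReal.ofReal_mul (by positivity), ← ENNReal.ofReal_rpow_of_nonneg hApos.le hr,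
      ← ENNReal.ofReal_rpow_of_nonneg ENNReal.toReal_nonneg hir.le, ENNReal.ofReal_toReal hAt,
      ENNReal.ofReal_toReal hBt]
  rw [e]
  exact ENNReal.ofReal_le_ofReal (by linarith)

end SelfSimilarImplosion
end
end
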